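/- arXiv:1306.6018 — 2 statements merged into one kernel-verified Lean document; each statement's English description precedes it below -/
import Mathlib

section
/- The symplectic group Sp(4, F_2) is isomorphic to the symmetric group S_6 on six letters. -/
namespace SpFour

open Matrix

/-- A symplectic basis of (even subsets of six letters) modulo the full set. -/
def S : Matrix (Fin 6) (Fin 2 ⊕ Fin 2) (ZMod 2) :=
  Matrix.of fun i j => Sum.elim ![![1,1,0,0,0,0], ![0,0,0,1,1,0]]
    ![![0,1,1,0,0,0], ![0,0,0,0,1,1]] j i

def L : Matrix (Fin 2 ⊕ Fin 2) (Fin 6) (ZMod 2) := J (Fin 2) (ZMod 2) * Sᵀ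

def P (σ : Equiv.Perm (Fin 6)) : Matrix (Fin 6) (Fin 6) (ZMod 2) :=
  (1 : Matrix (Fin 6) (Fin 6) (ZMod 2)).submatrix (σ⁻¹ : Equiv.Perm (Fin 6)) id

def one6 : Fin 6 → ZMod 2 := fun _ => 1
def uu : Fin 6 → ZMod 2 := ![1,1,1,0,0,0]
def vv : Fin 6 → ZMod 2 := ![0,0,0,1,1,1]

lemma P_mul {n : Type*} (σ : Equiv.Perm (Fin 6)) (X : Matrix (Fin 6) n (ZMod 2)) :
    P σ * X = X.submatrix (σ⁻¹ : Equiv.Perm (Fin 6)) id := by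
  ext i j
  simp [P, Matrix.mul_apply, Matrix.one_apply]

lemma P_mul_P (σ τ : Equiv.Perm (Fin 6)) : P σ * P τ = P (σ * τ) := by
  rw [P_mul]; ext i j; rw [P, P, _root_.mul_inv_rev]; rfl

lemma P_transpose (σ : Equiv.Perm (Fin 6)) : (P σ)ᵀ = P σ⁻¹ := by
  ext i j
  simp only [P, transpose_apply, submatrix_apply, Matrix.one_apply, id, inv_inv]
  congr 1
  rw [Equiv.Perm.inv_eq_iff_eq]
  exact propext eq_comm

lemma P_one : P 1 = 1 := by rw [P, inv_one]; rfl

lemma L_S : L * S = 1 := by decide +kernel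
lemma S_L : S * L = 1 + vecMulVec one6 uu + vecMulVec vv one6 := by decide +kernel
lemma L_one : L *ᵥ one6 = 0 := by decide +kernel
lemma one_S : one6 ᵥ* S = 0 := by decide +kernel
lemma P_one6 (σ : Equiv.Perm (Fin 6)) : P σ *ᵥ one6 = one6 := by
  ext i; simp [P, mulVec, dotProduct, one6, Matrix.one_apply]
lemma one6_P (σ : Equiv.Perm (Fin 6)) : one6 ᵥ* P σ = one6 := by
  rw [← mulVec_transpose, P_transpose, P_one6]

def M (σ : Equiv.Perm (Fin 6)) : Matrix (Fin 2 ⊕ Fin 2) (Fin 2 ⊕ Fin 2) (ZMod 2) := L * P σ * S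

lemma key (σ τ : Equiv.Perm (Fin 6)) : L * P σ * (S * L) * (P τ * S) = L * P (σ * τ) * S := by
  rw [S_L, Matrix.mul_add, Matrix.mul_add, Matrix.add_mul, Matrix.add_mul, mul_vecMulVec,
    mul_vecMulVec, ← mulVec_mulVec, P_one6, L_one, vecMulVec_mul _ one6, ← vecMul_vecMul, one6_P,
    one_S, ← P_mul_P]
  simp [Matrix.mul_assoc]

lemma M_mul (σ τ : Equiv.Perm (Fin 6)) : M (σ * τ) = M σ * M τ := by
  rw [M, ← key]; simp only [M, Matrix.mul_assoc]

lemma M_one : M 1 = 1 := by rw [M, P_one, Matrix.mul_one, L_S]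

lemma L_transpose : Lᵀ = S * J (Fin 2) (ZMod 2) := by decide +kernel
lemma S_transpose : J (Fin 2) (ZMod 2) * Sᵀ = L := rfl

lemma M_mem (σ : Equiv.Perm (Fin 6)) : M σ ∈ symplecticGroup (Fin 2) (ZMod 2) := by
  rw [SymplecticGroup.mem_iff]
  have h := key σ σ⁻¹
  rw [mul_inv_cancel, P_one, Matrix.mul_one, L_S] at h
  have h2 : M σ * J (Fin 2) (ZMod 2) * (M σ)ᵀ
      = (L * P σ * (S * L) * (P σ⁻¹ * S)) * J (Fin 2) (ZMod 2) := by
    rw [M, transpose_mul, transpose_mul, L_transpose, P_transpose, ← S_transpose]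
    simp only [Matrix.mul_assoc]
  rw [h2, h, Matrix.one_mul]

def f : Equiv.Perm (Fin 6) →* symplecticGroup (Fin 2) (ZMod 2) where
  toFun σ := ⟨M σ, M_mem σ⟩
  map_one' := Subtype.ext M_one
  map_mul' σ τ := Subtype.ext (M_mul σ τ)

lemma S_shift : ∀ c : Fin 2 ⊕ Fin 2 → ZMod 2,
    (∀ i : Fin 6, ∃ k : Fin 6, (fun j => S k j) = fun j => S i j + c j) → c = 0 := by decide +kernel

lemma S_inj : ∀ i k, ((fun j => S k j) = fun j => S i j) → k = i := by decide +kernel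

lemma f_inj : Function.Injective f := by
  rw [injective_iff_map_eq_one]
  intro σ h
  have h1 : L * P σ * S = 1 := congrArg Subtype.val h
  have h2 : S * L * (P σ * S) = S := by
    rw [Matrix.mul_assoc, ← Matrix.mul_assoc L, h1, Matrix.mul_one]
  rw [S_L, Matrix.add_mul, Matrix.add_mul, vecMulVec_mul, vecMulVec_mul, ← vecMul_vecMul one6,
    one6_P, one_S, Matrix.one_mul, P_mul] at h2
  rw [show vecMulVec vv (0 : Fin 2 ⊕ Fin 2 → ZMod 2) = 0 from by ext i j; simp [vecMulVec_apply], add_zero] at h2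
  set c := uu ᵥ* S.submatrix (σ⁻¹ : Equiv.Perm (Fin 6)) id with hc
  have h3 : ∀ i j, S (σ⁻¹ i) j = S i j + c j := by
    intro i j
    have := congrFun (congrFun h2 i) j
    simp only [Matrix.add_apply, submatrix_apply, id, vecMulVec_apply, one6, one_mul] at this
    rw [← this, add_assoc, CharTwo.add_self_eq_zero, add_zero]
  have h4 := S_shift c fun i => ⟨_, funext (h3 i)⟩
  rw [← inv_eq_one]
  ext i
  rw [S_inj i (σ⁻¹ i) (funext fun j => by rw [h3, h4]; simp)]
  rfl

abbrev V := ZMod 2 × ZMod 2 × ZMod 2 × ZMod 2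

/-- The symplectic form in coordinates. -/
def w (r s : V) : ZMod 2 :=
  r.1 * s.2.2.1 + r.2.1 * s.2.2.2 + r.2.2.1 * s.1 + r.2.2.2 * s.2.1

def T1 : Finset (V × V) := Finset.univ.filter fun p => w p.1 p.2 = 1
def T2 (p : V × V) : Finset (V × V) := Finset.univ.filter fun q =>
  w p.1 q.1 = 0 ∧ w p.2 q.1 = 0 ∧ w p.1 q.2 = 0 ∧ w p.2 q.2 = 0 ∧ w q.1 q.2 = 1

lemma card_T1 : T1.card = 120 := by decide +kernel
lemma card_T2 : ∀ p ∈ T1, (T2 p).card = 6 := by decide +kernel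

def row (A : Matrix (Fin 2 ⊕ Fin 2) (Fin 2 ⊕ Fin 2) (ZMod 2)) (i : Fin 2 ⊕ Fin 2) : V :=
  (A i (.inl 0), A i (.inl 1), A i (.inr 0), A i (.inr 1))

lemma w_row (A : Matrix (Fin 2 ⊕ Fin 2) (Fin 2 ⊕ Fin 2) (ZMod 2))
    (hA : A ∈ symplecticGroup (Fin 2) (ZMod 2)) (i j : Fin 2 ⊕ Fin 2) :
    w (row A i) (row A j) = J (Fin 2) (ZMod 2) i j := by
  rw [SymplecticGroup.mem_iff] at hA
  rw [← hA]
  simp [w, row, Matrix.mul_apply, J, Matrix.one_apply, CharTwo.neg_eq]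
  ring

def code (A : symplecticGroup (Fin 2) (ZMod 2)) : (_ : V × V) × (V × V) :=
  ⟨(row A.1 (.inl 0), row A.1 (.inr 0)), (row A.1 (.inl 1), row A.1 (.inr 1))⟩

lemma code_mem : ∃ T : Finset ((_ : V × V) × (V × V)), T.card = 720 ∧ ∀ A, code A ∈ T := by
  refine ⟨T1.sigma T2, ?_, fun A => ?_⟩
  · rw [Finset.card_sigma, Finset.sum_const_nat card_T2, card_T1]
  · simp only [Finset.mem_sigma, T1, T2, Finset.mem_filter, Finset.mem_univ, true_and, code,
      w_row A.1 A.2]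
    decide

lemma code_inj : Function.Injective code := by
  intro A B h
  simp only [code, row, Sigma.mk.injEq, Prod.mk.injEq, heq_eq_eq] at h
  apply Subtype.ext
  ext i j
  rcases i with i | i <;> rcases j with j | j <;> fin_cases i <;> fin_cases j <;> simp <;> tauto

lemma card_le : Nat.card (symplecticGroup (Fin 2) (ZMod 2)) ≤ 720 := by
  obtain ⟨T, h, hm⟩ := code_mem
  rw [← h, ← Nat.card_eq_finsetCard]
  exact Nat.card_le_card_of_injective
    (fun A => (⟨code A, hm A⟩ : {x // x ∈ T}))
    fun A B hAB => code_inj (congrArg Subtype.val hAB)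

end SpFour

/-- The symplectic group `Sp(4, F₂)` is isomorphic to the symmetric group `S₆`. -/
theorem sp4_f2_mulEquiv_perm_fin6 :
    Nonempty (Matrix.symplecticGroup (Fin 2) (ZMod 2) ≃* Equiv.Perm (Fin 6)) := by
  have hb : Function.Bijective SpFour.f := by
    refine (Nat.bijective_iff_injective_and_card _).2 ⟨SpFour.f_inj, le_antisymm ?_ ?_⟩
    · exact Nat.card_le_card_of_injective _ SpFour.f_inj
    · refine SpFour.card_le.trans (le_of_eq ?_)
      rw [Nat.card_eq_fintype_card, Fintype.card_perm]
      rfl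
  exact ⟨(MulEquiv.ofBijective SpFour.f hb).symm⟩
end

section
/- For every unordered pair {m_i, m_j} of distinct odd theta characteristics, there are exactly four even theta characteristics n that can be written as n = m_i + m_j + a with a an odd theta characteristic distinct from m_i and m_j. -/
/-- The parity of a theta characteristic `(μ₁, μ₂, ν₁, ν₂) ∈ F₂⁴`. -/
def thetaParity (m : Fin 4 → ZMod 2) : ZMod 2 := m 0 * m 2 + m 1 * m 3

/-- For every pair of distinct odd theta characteristics `mᵢ, mⱼ` there are exactly four
even theta characteristics `n` of the form `n = mᵢ + mⱼ + a` with `a` odd, `a ≠ mᵢ, mⱼ`. -/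
theorem four_even_characteristics_of_odd_pair (x y : Fin 4 → ZMod 2)
    (hx : thetaParity x = 1) (hy : thetaParity y = 1) (hxy : x ≠ y) :
    (Finset.univ.filter fun n : Fin 4 → ZMod 2 =>
      thetaParity n = 0 ∧
        ∃ a : Fin 4 → ZMod 2, thetaParity a = 1 ∧ a ≠ x ∧ a ≠ y ∧ n = x + y + a).card = 4 := by
  have key : ∀ n : Fin 4 → ZMod 2,
      (thetaParity n = 0 ∧
        ∃ a : Fin 4 → ZMod 2, thetaParity a = 1 ∧ a ≠ x ∧ a ≠ y ∧ n = x + y + a) ↔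
      (thetaParity n = 0 ∧ thetaParity (x + y + n) = 1) := by
    intro n
    have two : ∀ z : Fin 4 → ZMod 2, x + y + (x + y + z) = z := by
      intro z
      rw [← add_assoc, CharTwo.add_self_eq_zero, zero_add]
    refine and_congr_right fun hn => ⟨?_, fun h => ⟨x + y + n, h, ?_, ?_, (two n).symm⟩⟩
    · rintro ⟨a, ha, -, -, rfl⟩
      rwa [two]
    · intro h
      have : n = y := by
        rw [← two n, h, add_right_comm, CharTwo.add_self_eq_zero, zero_add]
      rw [this, hy] at hn
      exact one_ne_zero hn
    · intro h
      have : n = x := by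
        rw [← two n, h, add_assoc, CharTwo.add_self_eq_zero, add_zero]
      rw [this, hx] at hn
      exact one_ne_zero hn
  simp only [key]
  clear key
  revert x y
  decide +kernel
end
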